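/- arXiv:math/0611372 — 3 statements merged into one kernel-verified Lean document; each statement's English description precedes it below -/
import Mathlib

section
/- Let r ∈ [0,1] and let ξ ∈ Ξ. Then inf_{h ∈ F_{v,c}} B(h, ξ) ≥ r · inf_{h ∈ F_{v,c}} B(h, v·λ̃) if and only if r·(v·λ̃)(A) ≤ ξ(A) for every Borel set A ⊆ E. In other words, the set of designs with relative LOF-efficiency at least r (relative to the LOF-optimal design v·λ̃) is exactly Υ_v[r] := {ξ ∈ Ξ : r·(v·λ̃) ≤ ξ}. (Theorem 2.2) -/
/-!
Write `P = v·λ̃` and `E = [a, b]`. Functions of bounded variation form an algebra on `E`; they are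
bounded and measurable (hence integrable for every finite measure carried by `E`), and they have
at most countably many discontinuities.

*Sufficiency of `r P ≤ ξ`.* For every `h` and `θ`, `r ∫ (h - fᵀθ)² dP ≤ ∫ (h - fᵀθ)² dξ`; taking
infima over `θ` and then over `h` gives the inequality between the efficiencies.

*Necessity.* Every `g` in the alternative class is `L²(P)`-orthogonal to the regression functions,
so `σ² B(g, P) = ∫ g² dP ≥ c`. Let `d` be the density of the absolutely continuous part of `ξ`.
If `r v ≤ (b - a) d` holds almost everywhere then `r P ≤ ξ`. Otherwise `r v > (b - a) d` on a
nondegenerate interval free of atoms of `ξ` (`exists_interval`). On that interval there is a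
nonzero step function `h` orthogonal to the `k` functions `f_i v` (`exists_step`), which can be
scaled so that `∫ h² dP = c`. Choosing `θ = 0`,
`σ² B(h, ξ) ≤ ∫ h² dξ = ∫_E h² d < r ∫ h² dP = r c`, which contradicts the assumed inequality.
-/

set_option autoImplicit false

open MeasureTheory Set ENNReal

/-- The uniform (normalized Lebesgue) distribution on `[a, b]`. -/
noncomputable def unif (a b : ℝ) : Measure ℝ :=
  (ENNReal.ofReal (b - a))⁻¹ • volume.restrict (Icc a b)

/-- Membership in the class `Ξ` of designs: probability measures on `[a,b]` that are a finite
sum of point masses (located in `[a,b]`) plus a part that is absolutely continuous with respect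
to Lebesgue measure on `[a,b]` with a density of bounded variation. -/
def MemXi (a b : ℝ) (ξ : Measure ℝ) : Prop :=
  IsProbabilityMeasure ξ ∧
  ∃ (s : Finset ℝ) (w : ℝ → ℝ≥0∞) (d : ℝ → ℝ),
    (↑s : Set ℝ) ⊆ Icc a b ∧
    BoundedVariationOn d (Icc a b) ∧ (∀ x, 0 ≤ d x) ∧
    ξ = (∑ t ∈ s, w t • Measure.dirac t)
        + (volume.restrict (Icc a b)).withDensity (fun x => ENNReal.ofReal (d x))

/-- `B(h, ξ) = (1/σ²) inf_θ ∫ (h - fᵀθ)² dξ`, the (scaled) squared `L²(ξ)`-distance of `h`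
from the span of the regression functions. -/
noncomputable def Bfun (k : ℕ) (f : ℝ → Fin k → ℝ) (σ2 : ℝ) (h : ℝ → ℝ)
    (ξ : Measure ℝ) : ℝ :=
  (1 / σ2) * ⨅ θ : Fin k → ℝ, ∫ x, (h x - ∑ i, f x i * θ i) ^ 2 ∂ξ

/-- The class of alternatives `F_{v,c}`. -/
def FClass (a b : ℝ) (k : ℕ) (f : ℝ → Fin k → ℝ) (v : ℝ → ℝ) (c : ℝ) : Set (ℝ → ℝ) :=
  {h | BoundedVariationOn h (Icc a b) ∧ c ≤ ∫ x, (h x) ^ 2 * v x ∂(unif a b) ∧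
       ∀ i : Fin k, ∫ x, f x i * (h x * v x) ∂(unif a b) = 0}

/-! ### Functions of bounded variation on a compact interval -/

lemma bv_add {f g : ℝ → ℝ} {s : Set ℝ} (hf : BoundedVariationOn f s)
    (hg : BoundedVariationOn g s) : BoundedVariationOn (fun x => f x + g x) s := by
  refine ne_top_of_le_ne_top (ENNReal.add_ne_top.2 ⟨hf, hg⟩) (iSup_le fun p => ?_)
  calc _ ≤ ∑ i ∈ Finset.range p.1, (edist (f (p.2.1 (i + 1))) (f (p.2.1 i))
          + edist (g (p.2.1 (i + 1))) (g (p.2.1 i))) :=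
        Finset.sum_le_sum fun i _ => edist_add_add_le _ _ _ _
    _ ≤ _ := by
      rw [Finset.sum_add_distrib]
      exact add_le_add (eVariationOn.sum_le p.2.2.1 p.2.2.2)
        (eVariationOn.sum_le p.2.2.1 p.2.2.2)

lemma bv_mul {f g : ℝ → ℝ} {s : Set ℝ} (hf : BoundedVariationOn f s)
    (hg : BoundedVariationOn g s) : BoundedVariationOn (fun x => f x * g x) s :=
  hf.mul hg

lemma bv_of_monotone {f : ℝ → ℝ} (hf : Monotone f) (a b : ℝ) :
    BoundedVariationOn f (Icc a b) := by
  rcases lt_or_ge b a with h | h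
  · exact BoundedVariationOn.of_subsingleton (by simp [Icc_eq_empty_of_lt h])
  · have := (hf.monotoneOn (Icc a b)).locallyBoundedVariationOn a b (left_mem_Icc.2 h)
      (right_mem_Icc.2 h)
    rwa [inter_self] at this

lemma bv_const (c a b : ℝ) : BoundedVariationOn (fun _ : ℝ => c) (Icc a b) :=
  bv_of_monotone monotone_const a b

lemma bv_sub {f g : ℝ → ℝ} {a b : ℝ} (hf : BoundedVariationOn f (Icc a b))
    (hg : BoundedVariationOn g (Icc a b)) : BoundedVariationOn (fun x => f x - g x) (Icc a b) := by
  have := bv_add hf (bv_mul (bv_const (-1) a b) hg)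
  simpa [sub_eq_add_neg] using this

lemma bv_sum {ι : Type*} (t : Finset ι) {f : ι → ℝ → ℝ} {a b : ℝ}
    (hf : ∀ i, BoundedVariationOn (f i) (Icc a b)) :
    BoundedVariationOn (fun x => ∑ i ∈ t, f i x) (Icc a b) := by
  classical
  induction t using Finset.induction_on with
  | empty => simpa using bv_const 0 a b
  | insert i t hi ih =>
    simp only [Finset.sum_insert hi]
    exact bv_add (hf i) ih

lemma bv_sq {f : ℝ → ℝ} {a b : ℝ} (hf : BoundedVariationOn f (Icc a b)) :
    BoundedVariationOn (fun x => f x ^ 2) (Icc a b) := by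
  simpa [sq] using bv_mul hf hf

lemma bv_indicator (s t a b : ℝ) :
    BoundedVariationOn ((Ioc s t).indicator (fun _ => (1 : ℝ))) (Icc a b) := by
  have hmono : ∀ u : ℝ, Monotone ((Ioi u).indicator (fun _ => (1 : ℝ))) := by
    intro u x y hxy
    by_cases hx : u < x
    · simp [hx, hx.trans_le hxy]
    · simpa [hx] using indicator_nonneg (fun _ _ => zero_le_one) y
  -- The indicator of `(s, t]` is that of `(s, ∞)` times one minus that of `(t, ∞)`.
  have h := bv_mul (bv_of_monotone (hmono s) a b)
    (bv_sub (bv_const 1 a b) (bv_of_monotone (hmono t) a b))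
  convert h using 2 with x
  by_cases h1 : s < x <;> by_cases h2 : t < x <;> simp [indicator, h1, h2, not_le, not_lt.1]

lemma bv_bounded {f : ℝ → ℝ} {a b : ℝ} (hf : BoundedVariationOn f (Icc a b)) :
    ∃ M, ∀ x ∈ Icc a b, ‖f x‖ ≤ M := by
  refine ⟨‖f a‖ + (eVariationOn f (Icc a b)).toReal, fun x hx => ?_⟩
  have h := hf.dist_le hx (left_mem_Icc.2 (hx.1.trans hx.2))
  rw [dist_eq_norm] at h
  have := norm_le_norm_add_norm_sub' (f x) (f a)
  linarith

lemma bv_aemeasurable {f : ℝ → ℝ} {a b : ℝ} (hf : BoundedVariationOn f (Icc a b))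
    {ν : Measure ℝ} (hν : ν.restrict (Icc a b) = ν) : AEMeasurable f ν := by
  obtain ⟨p, q, hp, hq, rfl⟩ := hf.locallyBoundedVariationOn.exists_monotoneOn_sub_monotoneOn
  rw [← hν]
  exact (aemeasurable_restrict_of_monotoneOn measurableSet_Icc hp).sub
    (aemeasurable_restrict_of_monotoneOn measurableSet_Icc hq)

lemma bv_integrable {f : ℝ → ℝ} {a b : ℝ} (hf : BoundedVariationOn f (Icc a b))
    {ν : Measure ℝ} [IsFiniteMeasure ν] (hν : ν.restrict (Icc a b) = ν) : Integrable f ν := by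
  obtain ⟨M, hM⟩ := bv_bounded hf
  refine Integrable.of_bound (bv_aemeasurable hf hν).aestronglyMeasurable M ?_
  rw [← hν]
  exact ae_restrict_of_forall_mem measurableSet_Icc hM

/-- A function of bounded variation which is positive on a set of positive Lebesgue measure is
positive on a whole interval, which can moreover avoid any given finite set: all but countably
many points are points of continuity. -/
lemma exists_interval {q : ℝ → ℝ} {a b : ℝ} (hq : BoundedVariationOn q (Icc a b)) (s : Finset ℝ)
    (hn : ¬ ∀ᵐ x ∂volume.restrict (Icc a b), q x ≤ 0) :
    ∃ l u, l < u ∧ Icc l u ⊆ Icc a b ∧ ∀ x ∈ Icc l u, 0 < q x ∧ x ∉ s := by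
  obtain ⟨p₁, p₂, hp₁, hp₂, rfl⟩ := hq.locallyBoundedVariationOn.exists_monotoneOn_sub_monotoneOn
  set C := {x | x ∈ Icc a b ∧ ¬ContinuousWithinAt p₁ (Icc a b) x} ∪
    {x | x ∈ Icc a b ∧ ¬ContinuousWithinAt p₂ (Icc a b) x} ∪ (↑s ∪ {a, b}) with hC
  have hCc : C.Countable :=
    (hp₁.countable_not_continuousWithinAt.union hp₂.countable_not_continuousWithinAt).union
      (s.countable_toSet.union (by simp))
  obtain ⟨x, hx, hxC, hxq⟩ : ∃ x ∈ Icc a b, x ∉ C ∧ 0 < (p₁ - p₂) x := by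
    by_contra! hcon
    refine hn ?_
    filter_upwards [ae_restrict_mem measurableSet_Icc,
      ae_restrict_of_ae (hCc.ae_notMem volume)] with x hx hxC using hcon x hx hxC
  simp only [hC, mem_union, mem_ofPred_eq, not_or, not_and, not_not, mem_insert_iff,
    mem_singleton_iff, Finset.mem_coe] at hxC
  obtain ⟨⟨h1, h2⟩, hs, hxa, hxb⟩ := hxC
  have hIoo : Ioo a b ∈ nhds x :=
    Ioo_mem_nhds (lt_of_le_of_ne hx.1 (Ne.symm hxa)) (lt_of_le_of_ne hx.2 hxb)
  have hIcc : Icc a b ∈ nhds x := Filter.mem_of_superset hIoo Ioo_subset_Icc_self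
  have hcont : ContinuousAt (p₁ - p₂) x :=
    ((h1 hx).continuousAt hIcc).sub ((h2 hx).continuousAt hIcc)
  have hev : ∀ᶠ y in nhds x, y ∈ Icc a b ∧ 0 < (p₁ - p₂) y ∧ y ∉ s :=
    (Filter.eventually_mem_set.2 hIcc).and ((hcont.eventually (lt_mem_nhds hxq)).and
      (s.finite_toSet.isClosed.isOpen_compl.mem_nhds hs))
  obtain ⟨ε, hε, hball⟩ := Metric.nhds_basis_closedBall.eventually_iff.1 hev
  rw [Real.closedBall_eq_Icc] at hball
  exact ⟨x - ε, x + ε, by linarith, fun y hy => (hball hy).1, fun y hy => (hball hy).2⟩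

lemma integral_pos_of_pos_on {φ : ℝ → ℝ} {a b s t : ℝ} (hφ : BoundedVariationOn φ (Icc a b))
    (h0 : ∀ x ∈ Icc a b, 0 ≤ φ x) (hst : s < t) (hsub : Ioc s t ⊆ Icc a b)
    (hpos : ∀ x ∈ Ioc s t, 0 < φ x) : 0 < ∫ x in Icc a b, φ x := by
  rw [setIntegral_pos_iff_support_of_nonneg_ae (ae_restrict_of_forall_mem measurableSet_Icc h0)
    (bv_integrable hφ (by simp))]
  refine lt_of_lt_of_le ?_ (measure_mono (show Ioc s t ⊆ _ from fun x hx =>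
    ⟨(hpos x hx).ne', hsub hx⟩))
  simp [hst]

/-- On a nondegenerate interval there is a nonzero step function annihilated by `k` prescribed
linear functionals `h ↦ ∫ W i * h`: the step functions on `k + 1` cells form a space of
dimension `k + 1`. -/
lemma exists_step {a b l u : ℝ} (hlu : l < u) (k : ℕ)
    (W : Fin k → ℝ → ℝ) (hW : ∀ i, BoundedVariationOn (W i) (Icc a b)) :
    ∃ h : ℝ → ℝ, BoundedVariationOn h (Icc a b) ∧ (∀ x, x ∉ Icc l u → h x = 0) ∧
      (∃ s t, s < t ∧ Ioc s t ⊆ Icc l u ∧ ∀ x ∈ Ioc s t, h x ≠ 0) ∧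
      ∀ i, ∫ x in Icc a b, W i x * h x = 0 := by
  set η := (u - l) / (k + 1) with hη
  have hη0 : 0 < η := by have := sub_pos.2 hlu; positivity
  have hηk : η * (k + 1) = u - l := by rw [hη]; field_simp
  let J : Fin (k + 1) → Set ℝ := fun j => Ioc (l + j * η) (l + (j + 1) * η)
  let e : Fin (k + 1) → ℝ → ℝ := fun j => (J j).indicator (fun _ => 1)
  have hJsub : ∀ j, J j ⊆ Icc l u := by
    intro j x hx
    have hj : ((j : ℕ) : ℝ) ≤ k := by exact_mod_cast Nat.lt_succ_iff.1 j.2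
    have h1 : 0 ≤ ((j : ℕ) : ℝ) * η := by positivity
    have h2 : ((j : ℕ) : ℝ) * η ≤ k * η := mul_le_mul_of_nonneg_right hj hη0.le
    refine ⟨by linarith [hx.1], by linarith [hx.2]⟩
  have hJdisj : ∀ i j, i ≠ j → ∀ x ∈ J i, x ∉ J j := by
    have key : ∀ i j : Fin (k + 1), i < j → ∀ x ∈ J i, x ∉ J j := by
      intro i j hij x hx hx'
      have hj : ((i : ℕ) : ℝ) + 1 ≤ (j : ℕ) := by exact_mod_cast hij
      have h2 := mul_le_mul_of_nonneg_right hj hη0.le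
      linarith [hx.2, hx'.1]
    intro i j hij x hx hx'
    rcases lt_or_gt_of_ne hij with h | h
    · exact key i j h x hx hx'
    · exact key j i h x hx' hx
  have he : ∀ j, BoundedVariationOn (e j) (Icc a b) := fun j => bv_indicator _ _ a b
  let M : Matrix (Fin k) (Fin (k + 1)) ℝ := fun i j => ∫ x in Icc a b, W i x * e j x
  obtain ⟨c, hc, hc0⟩ := (Submodule.ne_bot_iff _).1
    (LinearMap.ker_ne_bot_of_finrank_lt (f := M.mulVecLin) (by simp))
  -- The cell `J j` with `c j ≠ 0` is where the step function does not vanish.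
  obtain ⟨j, hj⟩ := Function.ne_iff.1 hc0
  refine ⟨fun x => ∑ j, c j * e j x, bv_sum _ fun j => bv_mul (bv_const _ a b) (he j), ?_,
    ⟨l + j * η, l + (j + 1) * η, by linarith, hJsub j, ?_⟩, ?_⟩
  · intro x hx
    refine Finset.sum_eq_zero fun j _ => ?_
    have : x ∉ J j := fun h => hx (hJsub j h)
    simp [e, this]
  · intro x hx
    have hx' : x ∈ J j := hx
    show ∑ j, c j * e j x ≠ 0
    rw [Finset.sum_eq_single j]
    · simpa [e, hx'] using hj
    · intro i _ hij
      simp [e, hJdisj j i hij.symm x hx']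
    · simp
  · intro i
    have h1 : ∀ x, W i x * ∑ j, c j * e j x = ∑ j, c j * (W i x * e j x) := by
      intro x
      rw [Finset.mul_sum]
      exact Finset.sum_congr rfl fun j _ => by ring
    simp only [h1]
    rw [integral_finsetSum _ fun j _ => (bv_integrable (bv_mul (hW i) (he j)) (by simp)).const_mul _]
    simp only [integral_const_mul]
    have := congrFun (LinearMap.mem_ker.1 hc) i
    rw [Matrix.mulVecLin_apply] at this
    simpa only [Matrix.mulVec, dotProduct, M, mul_comm, Pi.zero_apply] using this

/-! ### The measures in play -/

lemma integral_unif {a b : ℝ} (hab : a < b) (g : ℝ → ℝ) :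
    ∫ x, g x ∂(unif a b) = (b - a)⁻¹ * ∫ x in Icc a b, g x := by
  rw [unif, integral_smul_measure, ENNReal.toReal_inv, ENNReal.toReal_ofReal (by linarith),
    smul_eq_mul]

lemma unif_restrict (a b : ℝ) : (unif a b).restrict (Icc a b) = unif a b := by
  simp [unif, Measure.restrict_smul]

lemma unif_finite {a b : ℝ} (hab : a < b) : IsFiniteMeasure (unif a b) := by
  refine ⟨?_⟩
  simp only [unif, Measure.smul_apply, smul_eq_mul]
  refine ENNReal.mul_lt_top (ENNReal.inv_lt_top.2 (by simpa using hab)) (measure_lt_top _ _)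

/-- Integration against a density reduces to integration against the base measure, which is
required to be carried by `[a, b]`. -/
lemma integral_density {a b : ℝ} {ν : Measure ℝ} (hν : ν.restrict (Icc a b) = ν) {d : ℝ → ℝ}
    (hd : BoundedVariationOn d (Icc a b)) (hd0 : ∀ x, 0 ≤ d x) (g : ℝ → ℝ) :
    ∫ x, g x ∂(ν.withDensity fun x => ENNReal.ofReal (d x)) = ∫ x, g x * d x ∂ν := by
  rw [integral_withDensity_eq_integral_toReal_smul₀ (bv_aemeasurable hd hν).ennreal_ofReal
    (by simp)]
  simp [ENNReal.toReal_ofReal (hd0 _), mul_comm]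

/-- A property of all the atoms holds almost everywhere for the atomic part of a design. -/
lemma ae_atoms {s : Finset ℝ} {w : ℝ → ℝ≥0∞} {p : ℝ → Prop} (hp : ∀ t ∈ s, p t) :
    ∀ᵐ x ∂(∑ t ∈ s, w t • Measure.dirac t), p x := by
  rw [ae_iff]
  simp only [Measure.coe_finsetSum, Finset.sum_apply, Measure.smul_apply, smul_eq_mul]
  refine Finset.sum_eq_zero fun t ht => ?_
  simp [Measure.dirac_apply, hp t ht]

/-- A design is carried by `[a, b]`. -/
lemma memXi_restrict {a b : ℝ} {ξ : Measure ℝ} (hξ : MemXi a b ξ) : ξ.restrict (Icc a b) = ξ := by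
  obtain ⟨_, s, w, d, hs, -, -, rfl⟩ := hξ
  rw [Measure.restrict_add, restrict_withDensity measurableSet_Icc,
    Measure.restrict_restrict measurableSet_Icc, inter_self]
  congr 1
  exact Measure.restrict_eq_self_of_ae_mem (ae_atoms fun t ht => hs ht)
/-! ### Characterization of the efficient designs -/

/-- **Theorem 2.2**: a design `ξ ∈ Ξ` has relative LOF-efficiency at least `r` (relative to the
LOF-optimal design `v·λ̃`) if and only if `r·(v·λ̃) ≤ ξ`. -/
theorem lof_efficiency_ge_iff
    (a b : ℝ) (hab : a < b) (k : ℕ)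
    (f : ℝ → Fin k → ℝ)
    (hfcont : ∀ i, ContinuousOn (fun x => f x i) (Icc a b))
    (hfBV : ∀ i, BoundedVariationOn (fun x => f x i) (Icc a b))
    (v : ℝ → ℝ) (hv0 : ∀ x, 0 ≤ v x) (hvBV : BoundedVariationOn v (Icc a b))
    (hv1 : ∫ x, v x ∂(unif a b) = 1)
    (σ2 : ℝ) (hσ : 0 < σ2) (c : ℝ) (hc : 0 < c)
    (r : ℝ) (hr : r ∈ Icc (0 : ℝ) 1)
    (ξ : Measure ℝ) (hξ : MemXi a b ξ) :
    r * sInf ((fun h => Bfun k f σ2 h ((unif a b).withDensity fun x => ENNReal.ofReal (v x)))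
          '' FClass a b k f v c)
        ≤ sInf ((fun h => Bfun k f σ2 h ξ) '' FClass a b k f v c)
      ↔ ENNReal.ofReal r • ((unif a b).withDensity fun x => ENNReal.ofReal (v x)) ≤ ξ := by
  have hμr := unif_restrict a b
  have := unif_finite hab
  have hξr := memXi_restrict hξ
  have := hξ.1
  set P := (unif a b).withDensity fun x => ENNReal.ofReal (v x) with hP
  have hPint : ∀ g : ℝ → ℝ, ∫ x, g x ∂P = ∫ x, g x * v x ∂(unif a b) :=
    integral_density hμr hvBV hv0
  have hlin : ∀ θ : Fin k → ℝ, BoundedVariationOn (fun x => ∑ i, f x i * θ i) (Icc a b) :=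
    fun θ => bv_sum _ fun i => bv_mul (hfBV i) (bv_const (θ i) a b)
  have hbdd : ∀ (h : ℝ → ℝ) (ν : Measure ℝ), BddBelow (range fun θ : Fin k → ℝ =>
      ∫ x, (h x - ∑ i, f x i * θ i) ^ 2 ∂ν) := fun h ν =>
    ⟨0, by rintro _ ⟨θ, rfl⟩; exact integral_nonneg fun x => sq_nonneg _⟩
  have hB0 : ∀ (h : ℝ → ℝ) (ν : Measure ℝ), 0 ≤ Bfun k f σ2 h ν := fun h ν =>
    mul_nonneg (by positivity) (le_ciInf fun θ => integral_nonneg fun x => sq_nonneg _)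
  have hBdd : ∀ ν : Measure ℝ, BddBelow ((fun h => Bfun k f σ2 h ν) '' FClass a b k f v c) :=
    fun ν => ⟨0, by rintro _ ⟨h, -, rfl⟩; exact hB0 h ν⟩
  constructor
  · intro hle
    obtain ⟨-, s, w, d, hs, hdBV, hd0, hξeq⟩ := hξ
    have hba : 0 < b - a := sub_pos.2 hab
    have hqBV : BoundedVariationOn (fun x => r * v x - (b - a) * d x) (Icc a b) :=
      bv_sub (bv_mul (bv_const r a b) hvBV) (bv_mul (bv_const (b - a) a b) hdBV)
    by_cases hn : ∀ᵐ x ∂volume.restrict (Icc a b), r * v x - (b - a) * d x ≤ 0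
    · have h1 : ENNReal.ofReal r • P = (volume.restrict (Icc a b)).withDensity
          (fun x => ENNReal.ofReal (r * (b - a)⁻¹ * v x)) := by
        rw [hP, unif, withDensity_smul_measure, smul_smul, ← ENNReal.ofReal_inv_of_pos hba,
          ← ENNReal.ofReal_mul hr.1, ← withDensity_smul' _ _ ENNReal.ofReal_ne_top]
        congr 1
        ext x
        rw [Pi.smul_apply, smul_eq_mul, ← ENNReal.ofReal_mul (mul_nonneg hr.1 (by positivity))]
      rw [h1, hξeq]
      refine (withDensity_mono ?_).trans (Measure.le_add_left le_rfl)
      filter_upwards [hn] with x hx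
      refine ENNReal.ofReal_le_ofReal ?_
      rw [mul_right_comm, ← div_eq_mul_inv, div_le_iff₀ hba]
      linarith
    · exfalso
      obtain ⟨l, u, hlu, hsub, hq⟩ := exists_interval hqBV s hn
      obtain ⟨h, hhBV, hh0, ⟨s', t', hst, hst', hne⟩, horth⟩ :=
        exists_step hlu k (fun i x => f x i * v x) fun i => bv_mul (hfBV i) hvBV
      have hqpos : ∀ x ∈ Icc l u, 0 < r * v x := fun x hx => by
        have := mul_nonneg hba.le (hd0 x)
        linarith [(hq x hx).1]
      have hvpos : ∀ x ∈ Icc l u, 0 < v x := fun x hx => pos_of_mul_pos_right (hqpos x hx) hr.1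
      have hIpos : 0 < ∫ x in Icc a b, h x ^ 2 * v x :=
        integral_pos_of_pos_on (bv_mul (bv_sq hhBV) hvBV)
          (fun x _ => mul_nonneg (sq_nonneg _) (hv0 x)) hst (hst'.trans hsub) fun x hx =>
          mul_pos (sq_pos_iff.2 (hne x hx)) (hvpos x (hst' hx))
      -- The excess of `r·(v·λ̃)` over `ξ`, seen by the test function `h²`.
      have hDpos : 0 < ∫ x in Icc a b, h x ^ 2 * (r * v x - (b - a) * d x) :=
        integral_pos_of_pos_on (bv_mul (bv_sq hhBV) hqBV)
          (fun x _ => by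
            by_cases hx : x ∈ Icc l u
            · exact mul_nonneg (sq_nonneg _) (hq x hx).1.le
            · simp [hh0 x hx])
          hst (hst'.trans hsub) fun x hx =>
          mul_pos (sq_pos_iff.2 (hne x hx)) (hq x (hst' hx)).1
      have hD : ∫ x in Icc a b, h x ^ 2 * (r * v x - (b - a) * d x)
          = r * (∫ x in Icc a b, h x ^ 2 * v x) - (b - a) * ∫ x in Icc a b, h x ^ 2 * d x := by
        rw [← integral_const_mul, ← integral_const_mul, ← integral_sub]
        · exact integral_congr_ae (.of_forall fun x => by ring)
        · exact (bv_integrable (bv_mul (bv_sq hhBV) hvBV) (by simp)).const_mul _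
        · exact (bv_integrable (bv_mul (bv_sq hhBV) hdBV) (by simp)).const_mul _
      have hξint : ∫ x, h x ^ 2 ∂ξ = ∫ x in Icc a b, h x ^ 2 * d x := by
        have hi : Integrable (fun x => h x ^ 2) ξ := bv_integrable (bv_sq hhBV) hξr
        rw [hξeq] at hi ⊢
        rw [integral_add_measure hi.left_of_add_measure hi.right_of_add_measure,
          integral_density (by simp) hdBV hd0]
        -- `h` vanishes at every atom of `ξ`.
        have hz : ∫ x, h x ^ 2 ∂(∑ t ∈ s, w t • Measure.dirac t) = 0 := by
          refine integral_eq_zero_of_ae (ae_atoms fun t ht => ?_)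
          have : h t = 0 := hh0 t fun h' => (hq t h').2 ht
          simp [this]
        rw [hz, zero_add]
      -- Normalize so that `∫ h² v dλ̃ = c` exactly.
      set I := ∫ x, h x ^ 2 * v x ∂(unif a b) with hI
      have hIu : I = (b - a)⁻¹ * ∫ x in Icc a b, h x ^ 2 * v x := integral_unif hab _
      have hI0 : 0 < I := by rw [hIu]; positivity
      set γ := Real.sqrt (c / I) with hγ
      have hγ2 : γ ^ 2 = c / I := Real.sq_sqrt (by positivity)
      have hmem : (fun x => γ * h x) ∈ FClass a b k f v c := by
        refine ⟨bv_mul (bv_const γ a b) hhBV, ?_, fun i => ?_⟩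
        · have : ∀ x, (γ * h x) ^ 2 * v x = γ ^ 2 * (h x ^ 2 * v x) := fun x => by ring
          simp only [this, integral_const_mul]
          rw [← hI, hγ2, div_mul_cancel₀ _ hI0.ne']
        · have : ∀ x, f x i * (γ * h x * v x) = γ * (f x i * v x * h x) := fun x => by ring
          simp only [this, integral_const_mul]
          rw [integral_unif hab, horth i]
          simp
      -- For alternatives, orthogonality makes `σ² B(g, P) = ∫ g² dP`, which is at least `c`.
      have hlow : c / σ2 ≤ sInf ((fun h => Bfun k f σ2 h P) '' FClass a b k f v c) := by
        refine le_csInf (Nonempty.image _ ⟨_, hmem⟩) ?_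
        rintro _ ⟨g, ⟨hgBV, hgc, hg0⟩, rfl⟩
        show c / σ2 ≤ 1 / σ2 * _
        rw [div_eq_mul_one_div, mul_comm]
        refine mul_le_mul_of_nonneg_left (le_ciInf fun θ => ?_) (by positivity)
        have hcross : ∫ x, ∑ i, θ i * (f x i * (g x * v x)) ∂(unif a b) = 0 := by
          rw [integral_finsetSum _ fun i _ => (bv_integrable
            (bv_mul (hfBV i) (bv_mul hgBV hvBV)) hμr).const_mul _]
          simp [integral_const_mul, hg0]
        have hexp : ∀ x, (g x - ∑ i, f x i * θ i) ^ 2 * v x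
            = (g x ^ 2 * v x + (∑ i, f x i * θ i) ^ 2 * v x)
              - 2 * ∑ i, θ i * (f x i * (g x * v x)) := by
          intro x
          have : ∑ i, θ i * (f x i * (g x * v x)) = (∑ i, f x i * θ i) * (g x * v x) := by
            rw [Finset.sum_mul]
            exact Finset.sum_congr rfl fun i _ => by ring
          rw [this]; ring
        have i1 := bv_integrable (bv_mul (bv_sq hgBV) hvBV) hμr
        have i2 := bv_integrable (bv_mul (bv_sq (hlin θ)) hvBV) hμr
        have i3 : Integrable (fun x => 2 * ∑ i, θ i * (f x i * (g x * v x))) (unif a b) :=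
          (bv_integrable (bv_sum _ fun i => bv_mul (bv_const (θ i) a b)
            (bv_mul (hfBV i) (bv_mul hgBV hvBV))) hμr).const_mul 2
        rw [hPint]
        simp only [hexp]
        have i12 := integral_sub (i1.add i2) i3
        simp only [Pi.add_apply] at i12
        rw [i12, integral_add i1 i2, integral_const_mul, hcross]
        have : 0 ≤ ∫ x, (∑ i, f x i * θ i) ^ 2 * v x ∂(unif a b) :=
          integral_nonneg fun x => mul_nonneg (sq_nonneg _) (hv0 x)
        linarith
      -- The choice `θ = 0` bounds `B(γ h, ξ)` from above.
      have hup : sInf ((fun h => Bfun k f σ2 h ξ) '' FClass a b k f v c)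
          ≤ 1 / σ2 * (γ ^ 2 * ∫ x in Icc a b, h x ^ 2 * d x) := by
        refine (csInf_le (hBdd ξ) (mem_image_of_mem _ hmem)).trans ?_
        refine mul_le_mul_of_nonneg_left ((ciInf_le (hbdd _ ξ) 0).trans_eq ?_) (by positivity)
        simp only [Pi.zero_apply, mul_zero, Finset.sum_const_zero, sub_zero, mul_pow]
        rw [integral_const_mul, hξint]
      have h3 : r * (c / σ2) ≤ 1 / σ2 * (γ ^ 2 * ∫ x in Icc a b, h x ^ 2 * d x) :=
        (mul_le_mul_of_nonneg_left hlow hr.1).trans (hle.trans hup)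
      have h4 : ∫ x in Icc a b, h x ^ 2 * d x < r * I := by
        rw [hIu, ← mul_assoc, mul_right_comm, ← div_eq_mul_inv, lt_div_iff₀ hba]
        linarith
      have h5 : 1 / σ2 * (γ ^ 2 * ∫ x in Icc a b, h x ^ 2 * d x) < 1 / σ2 * (γ ^ 2 * (r * I)) := by
        have : 0 < γ ^ 2 := by rw [hγ2]; positivity
        gcongr
      have h6 : 1 / σ2 * (γ ^ 2 * (r * I)) = r * (c / σ2) := by
        rw [hγ2]; field_simp
      linarith
  · intro hle
    -- With no alternatives both infima are `sInf ∅ = 0`.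
    rcases (FClass a b k f v c).eq_empty_or_nonempty with he | hne
    · simp [he]
    refine le_csInf (hne.image _) ?_
    rintro _ ⟨h, hh, rfl⟩
    refine (mul_le_mul_of_nonneg_left (csInf_le (hBdd P) (mem_image_of_mem _ hh)) hr.1).trans ?_
    show r * (1 / σ2 * _) ≤ 1 / σ2 * _
    rw [mul_left_comm]
    refine mul_le_mul_of_nonneg_left (le_ciInf fun θ => ?_) (by positivity)
    calc r * ⨅ θ : Fin k → ℝ, ∫ x, (h x - ∑ i, f x i * θ i) ^ 2 ∂P
        ≤ r * ∫ x, (h x - ∑ i, f x i * θ i) ^ 2 ∂P :=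
          mul_le_mul_of_nonneg_left (ciInf_le (hbdd h P) θ) hr.1
      _ = ∫ x, (h x - ∑ i, f x i * θ i) ^ 2 ∂(ENNReal.ofReal r • P) := by
          rw [integral_smul_measure, ENNReal.toReal_ofReal hr.1, smul_eq_mul]
      _ ≤ _ := integral_mono_measure hle (.of_forall fun x => sq_nonneg _)
          (bv_integrable (bv_sq (bv_sub hh.1 (hlin θ))) hξr)
end

section
/- Let k ≥ 2, x_i = cos((k−1−i)π/(k−1)) for i = 0,…,k−1, let ν_i = 1/2 for i ∈ {0, k−1} and ν_i = 1 for i ∈ {1,…,k−2}, and let v : [−1,1] → ℝ be integrable. Define q_i = (ν_i/(2(k−1))) · Σ_{j=0}^{2k−3} cos(j(k−1−i)π/(k−1)) · ∫_{−1}^{1} T_j(x) v(x) dx. Then for every m ∈ {0,1,…,k−2}: Σ_{i=0}^{k−1} (−1)^{k−1−i} T_m(x_i) q_i = (1/2) ∫_{−1}^{1} T_m(x) T_{k−1}(x) v(x) dx. (Identity (A.4) in the proof of Theorem 3.2) -/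
/-!
With `n = k - 1` and `θ_l = l π / n` (where `l = n - i`), the sign is `(-1)^l = cos (n θ_l)`, and
since `sin (n θ_l) = 0`, the factor `(-1)^l T_m(x_i)` equals `cos ((n + m) θ_l)`. The weights `ν` are
those of the trapezoidal rule, for which the cosines satisfy the discrete orthogonality relation
`∑ ν_l cos (a θ_l) = n` if `2n ∣ a` and `0` otherwise (`sum_trapWeight_cos`). Among
`j = 0, …, 2n - 1` this selects exactly `j = n + m` and `j = n - m` (the same index, counted twice,
if `m = 0`), so the left side is `(∫ T_{n+m} v + ∫ T_{n-m} v) / 4`; conclude by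
`2 T_m T_n = T_{m+n} + T_{m-n}`.
-/

set_option autoImplicit false

open Set Real Polynomial MeasureTheory

/-- The weights of the trapezoidal rule with nodes `0, …, n`: one half at both ends, one inside. -/
noncomputable def trapWeight (n l : ℕ) : ℝ := if l = 0 ∨ l = n then 1 / 2 else 1

theorem sum_trapWeight (n : ℕ) (hn : 1 ≤ n) (f : ℕ → ℝ) :
    ∑ l ∈ Finset.range (n + 1), trapWeight n l * f l
      = ∑ l ∈ Finset.range n, (f l + f (l + 1)) / 2 := by
  obtain ⟨p, rfl⟩ : ∃ p, n = p + 1 := ⟨n - 1, by omega⟩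
  have h1 : ∑ l ∈ Finset.range p, trapWeight (p + 1) (l + 1) * f (l + 1)
      = ∑ l ∈ Finset.range p, f (l + 1) := by
    refine Finset.sum_congr rfl fun l hl => ?_
    have := Finset.mem_range.1 hl
    rw [trapWeight, if_neg (by omega), one_mul]
  rw [Finset.sum_range_succ, Finset.sum_range_succ', h1, ← Finset.sum_div,
    Finset.sum_add_distrib, Finset.sum_range_succ' f, Finset.sum_range_succ (fun l => f (l + 1))]
  simp only [trapWeight, true_or, or_true, if_true]
  ring

/-- Discrete orthogonality: the trapezoidal sum of `cos (a ·)` over the grid `l π / n`. -/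
theorem sum_trapWeight_cos (n : ℕ) (hn : 1 ≤ n) (a : ℤ) :
    ∑ l ∈ Finset.range (n + 1), trapWeight n l * Real.cos (a * (l * π / n))
      = if (2 * n : ℤ) ∣ a then (n : ℝ) else 0 := by
  have hn0 : (n : ℝ) ≠ 0 := by positivity
  rw [sum_trapWeight n hn (fun l => Real.cos (a * (l * π / n)))]
  split_ifs with h
  · obtain ⟨c, rfl⟩ := h
    have key : ∀ l : ℕ, Real.cos (((2 * n * c : ℤ) : ℝ) * (l * π / n)) = 1 := by
      intro l
      have : ((2 * n * c : ℤ) : ℝ) * (l * π / n) = ((c * l : ℤ) : ℝ) * (2 * π) := by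
        push_cast; field_simp
      rw [this, Real.cos_int_mul_two_pi]
    simp only [key]
    simp
  · -- Multiplied by `sin (φ / 2)`, where `φ = a π / n`, the sum telescopes to a multiple of
    -- `sin (n φ) = 0`.
    have hs : Real.sin (a * π / n / 2) ≠ 0 := by
      intro h0
      obtain ⟨c, hc⟩ := Real.sin_eq_zero_iff.1 h0
      apply h
      refine ⟨c, ?_⟩
      have : (c : ℝ) * (2 * n) = a := by
        have hpi := Real.pi_ne_zero
        field_simp at hc
        linarith
      have h2 : (c : ℤ) * (2 * n) = a := by exact_mod_cast this
      linarith
    have key : ∀ l : ℕ, Real.sin (a * π / n / 2) *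
        ((Real.cos (a * (l * π / n)) + Real.cos (a * ((l + 1 : ℕ) * π / n))) / 2)
        = Real.cos (a * π / n / 2) / 2 *
          (Real.sin (a * ((l + 1 : ℕ) * π / n)) - Real.sin (a * (l * π / n))) := by
      intro l
      have e1 : a * (l * π / n) = (a * (l * π / n) + a * π / n / 2) - a * π / n / 2 := by ring
      have e2 : a * ((l + 1 : ℕ) * π / n)
          = (a * (l * π / n) + a * π / n / 2) + a * π / n / 2 := by push_cast; ring
      rw [e2]
      generalize hA : a * (l * π / n) + a * π / n / 2 = A at *
      rw [e1, Real.cos_add, Real.cos_sub, Real.sin_add, Real.sin_sub]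
      ring
    apply mul_left_cancel₀ hs
    rw [Finset.mul_sum, Finset.sum_congr rfl fun l _ => key l, ← Finset.mul_sum,
      Finset.sum_range_sub (fun l : ℕ => Real.sin (a * (l * π / n)))]
    have e : a * ((n : ℝ) * π / n) = a * π := by field_simp
    simp [e, Real.sin_int_mul_pi]

theorem sum_trapWeight_cos_mul_cos (n : ℕ) (hn : 1 ≤ n) (a b : ℤ) :
    ∑ l ∈ Finset.range (n + 1),
        trapWeight n l * (Real.cos (a * (l * π / n)) * Real.cos (b * (l * π / n)))
      = ((if (2 * n : ℤ) ∣ a - b then (n : ℝ) else 0)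
          + if (2 * n : ℤ) ∣ a + b then (n : ℝ) else 0) / 2 := by
  rw [← sum_trapWeight_cos n hn, ← sum_trapWeight_cos n hn, ← Finset.sum_add_distrib,
    Finset.sum_div]
  refine Finset.sum_congr rfl fun l _ => ?_
  push_cast
  rw [sub_mul, add_mul, Real.cos_sub, Real.cos_add]
  ring

/-- On the grid `l π / n`, multiplication by `(-1)^l = cos (n θ_l)` raises the frequency by `n`. -/
theorem neg_one_pow_mul_cos (n : ℕ) (hn : 1 ≤ n) (m : ℤ) (l : ℕ) :
    (-1 : ℝ) ^ l * Real.cos (m * (l * π / n)) = Real.cos ((n + m : ℤ) * (l * π / n)) := by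
  have hn0 : (n : ℝ) ≠ 0 := by positivity
  have e : ((n + m : ℤ) : ℝ) * (l * π / n) = m * (l * π / n) + l * π := by
    push_cast; field_simp; ring
  rw [e, Real.cos_add_nat_mul_pi]

/-- Aliasing: on the grid `l π / n`, a cosine sum over `0 ≤ j < 2n` only feels the frequencies
`n + m` and `n - m` when tested against `cos ((n + m) ·)`. -/
theorem sum_trapWeight_cos_mul_sum (n m : ℕ) (hm : m < n) (I : ℤ → ℝ) :
    ∑ l ∈ Finset.range (n + 1), trapWeight n l * (Real.cos ((n + m : ℤ) * (l * π / n)) *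
        ∑ j ∈ Finset.range (2 * n), Real.cos ((j : ℤ) * (l * π / n)) * I j)
      = n / 2 * (I (n + m) + I (n - m)) := by
  have hn : 1 ≤ n := by omega
  simp only [Finset.mul_sum]
  rw [Finset.sum_comm]
  have h1 : ∀ j ∈ Finset.range (2 * n), ∑ l ∈ Finset.range (n + 1),
      trapWeight n l * (Real.cos ((n + m : ℤ) * (l * π / n)) *
        (Real.cos ((j : ℤ) * (l * π / n)) * I j))
      = (if j = n + m then (n : ℝ) / 2 * I j else 0)
        + if j = n - m then (n : ℝ) / 2 * I j else 0 := by
    intro j hj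
    have hj := Finset.mem_range.1 hj
    have d1 : (2 * n : ℤ) ∣ (n + m : ℤ) - j ↔ j = n + m := by
      constructor
      · intro h
        have := Int.eq_zero_of_abs_lt_dvd h (by rw [abs_lt]; constructor <;> omega)
        omega
      · rintro rfl; simp
    have d2 : (2 * n : ℤ) ∣ (n + m : ℤ) + j ↔ j = n - m := by
      constructor
      · intro h
        have h' : (2 * n : ℤ) ∣ (n + m : ℤ) + j - 2 * n := dvd_sub_self_right.2 h
        have := Int.eq_zero_of_abs_lt_dvd h' (by rw [abs_lt]; constructor <;> omega)
        omega
      · intro h; exact ⟨1, by omega⟩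
    have h2 := sum_trapWeight_cos_mul_cos n hn (n + m) j
    simp only [d1, d2] at h2
    simp only [← mul_assoc] at h2 ⊢
    rw [← Finset.sum_mul, h2]
    split_ifs <;> ring
  rw [Finset.sum_congr rfl h1, Finset.sum_add_distrib, Finset.sum_ite_eq', Finset.sum_ite_eq',
    if_pos (Finset.mem_range.2 (by omega)), if_pos (Finset.mem_range.2 (by omega))]
  push_cast [hm.le]
  ring

theorem intervalIntegrable_T_mul {v : ℝ → ℝ} (hv : IntegrableOn v (Icc (-1 : ℝ) 1)) (j : ℤ) :
    IntervalIntegrable (fun t => Polynomial.eval t (Polynomial.Chebyshev.T ℝ j) * v t)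
      volume (-1) 1 :=
  ((intervalIntegrable_iff_integrableOn_Icc_of_le (by norm_num)).2 hv).continuousOn_mul
    (Polynomial.continuous _).continuousOn

theorem integral_T_mul_T {v : ℝ → ℝ} (hv : IntegrableOn v (Icc (-1 : ℝ) 1)) (n m : ℤ) :
    ∫ t in (-1 : ℝ)..1, Polynomial.eval t (Polynomial.Chebyshev.T ℝ m) *
        Polynomial.eval t (Polynomial.Chebyshev.T ℝ n) * v t
      = ((∫ t in (-1 : ℝ)..1, Polynomial.eval t (Polynomial.Chebyshev.T ℝ (n + m)) * v t)
        + ∫ t in (-1 : ℝ)..1, Polynomial.eval t (Polynomial.Chebyshev.T ℝ (n - m)) * v t) / 2 := by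
  rw [← intervalIntegral.integral_add (intervalIntegrable_T_mul hv _)
    (intervalIntegrable_T_mul hv _), ← intervalIntegral.integral_div]
  refine intervalIntegral.integral_congr fun t _ => ?_
  have h := congrArg (Polynomial.eval t) (Polynomial.Chebyshev.T_mul_T ℝ n m)
  simp only [Polynomial.eval_mul, Polynomial.eval_add, Polynomial.eval_ofNat] at h
  rw [← add_mul, ← h]
  ring

/-- **Identity (A.4)** in the proof of Theorem 3.2: with `x_i = cos((k-1-i)π/(k-1))`,
`ν_0 = ν_{k-1} = 1/2`, `ν_i = 1` otherwise, and
`q_i = (ν_i/(2(k-1))) Σ_{j=0}^{2k-3} cos(j(k-1-i)π/(k-1)) ∫ T_j v`, one has, for every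
`m ∈ {0,…,k-2}`,
`Σ_i (-1)^{k-1-i} T_m(x_i) q_i = (1/2) ∫ T_m T_{k-1} v`. -/
theorem signed_sum_chebyshev_q (k : ℕ) (hk : 2 ≤ k)
    (v : ℝ → ℝ) (hv : IntegrableOn v (Icc (-1 : ℝ) 1))
    (x : Fin k → ℝ)
    (hx : ∀ i, x i = Real.cos (((k - 1 - (i : ℕ) : ℕ) : ℝ) * π / (k - 1)))
    (ν : Fin k → ℝ)
    (hν : ∀ i, ν i = if (i : ℕ) = 0 ∨ (i : ℕ) = k - 1 then 1 / 2 else 1)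
    (q : Fin k → ℝ)
    (hq : ∀ i, q i = ν i / (2 * (k - 1)) *
      ∑ j ∈ Finset.range (2 * k - 2),
        Real.cos (j * ((k - 1 - (i : ℕ) : ℕ) : ℝ) * π / (k - 1)) *
          ∫ t in (-1 : ℝ)..1, Polynomial.eval t (Polynomial.Chebyshev.T ℝ (j : ℤ)) * v t)
    (m : ℕ) (hm : m ≤ k - 2) :
    ∑ i : Fin k,
        (-1 : ℝ) ^ (k - 1 - (i : ℕ)) *
          Polynomial.eval (x i) (Polynomial.Chebyshev.T ℝ (m : ℤ)) * q i
      = (1 / 2) * ∫ t in (-1 : ℝ)..1,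
          Polynomial.eval t (Polynomial.Chebyshev.T ℝ (m : ℤ)) *
            Polynomial.eval t (Polynomial.Chebyshev.T ℝ ((k : ℤ) - 1)) * v t := by
  obtain ⟨n, rfl⟩ : ∃ n, k = n + 1 := ⟨k - 1, by omega⟩
  have hn : 1 ≤ n := by omega
  have hn0 : (n : ℝ) ≠ 0 := by positivity
  set I : ℤ → ℝ := fun j =>
    ∫ t in (-1 : ℝ)..1, Polynomial.eval t (Polynomial.Chebyshev.T ℝ j) * v t with hI
  -- The summand as a function of the reflected index `l = n - i`.
  set G : ℕ → ℝ := fun l => trapWeight n l * (Real.cos ((n + m : ℤ) * (l * π / n)) *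
    ∑ j ∈ Finset.range (2 * n), Real.cos ((j : ℤ) * (l * π / n)) * I j) with hG
  have hterm : ∀ i : Fin (n + 1),
      (-1 : ℝ) ^ (n + 1 - 1 - (i : ℕ)) *
          Polynomial.eval (x i) (Polynomial.Chebyshev.T ℝ (m : ℤ)) * q i
        = (fun i => G (n + 1 - 1 - i) / (2 * n)) (i : ℕ) := by
    intro i
    have hi : (i : ℕ) < n + 1 := i.2
    have hw : ν i = trapWeight n (n + 1 - 1 - (i : ℕ)) := by
      rw [hν, trapWeight]
      exact if_congr (by omega) rfl rfl
    have hk1 : ((n + 1 : ℕ) : ℝ) - 1 = n := by push_cast; ring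
    have hr : 2 * (n + 1) - 2 = 2 * n := by omega
    rw [hq, hw, hx, hk1, hr, Polynomial.Chebyshev.T_real_cos]
    simp only [hG]
    rw [← neg_one_pow_mul_cos n hn]
    generalize n + 1 - 1 - (i : ℕ) = l
    have hsum : ∑ j ∈ Finset.range (2 * n), Real.cos (j * (l : ℝ) * π / n) * I (j : ℤ)
        = ∑ j ∈ Finset.range (2 * n), Real.cos ((j : ℤ) * (l * π / n)) * I j := by
      refine Finset.sum_congr rfl fun j _ => ?_
      congr 2
      push_cast
      ring
    rw [hsum]
    ring
  rw [Finset.sum_congr rfl fun i _ => hterm i,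
    Fin.sum_univ_eq_sum_range (fun i => G (n + 1 - 1 - i) / (2 * n)) (n + 1),
    Finset.sum_range_reflect (fun l => G l / (2 * n)) (n + 1), ← Finset.sum_div,
    sum_trapWeight_cos_mul_sum n m (by omega) I, integral_T_mul_T hv]
  have hc : ((n + 1 : ℕ) : ℤ) - 1 = n := by push_cast; ring
  rw [hc]
  simp only [hI]
  field_simp
end

section
/- Let k ≥ 2, x_i = cos((k−1−i)π/(k−1)) for i = 0,…,k−1, let F ∈ ℝ^{k×k} have entries F_{ℓ,i} = (x_{i−1})^{ℓ−1}, let S = diag(s_1,…,s_k) with s_{i+1} = (−1)^{k−1−i}, let v : [−1,1] → [0,∞) be integrable, let R = ∫_{−1}^{1} f(x) f(x)ᵀ v(x) dλ̃(x) ∈ ℝ^{k×k} with f(x) = (1,x,…,x^{k−1})ᵀ and λ̃ the uniform distribution on [−1,1], and let q = (q_0,…,q_{k−1})ᵀ with q_i = (ν_i/(2(k−1))) Σ_{j=0}^{2k−3} cos(j(k−1−i)π/(k−1)) ∫_{−1}^{1} T_j(x) v(x) dx, where ν_i = 1/2 for i ∈ {0,k−1} and ν_i = 1 otherwise. Let R̃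 ∈ ℝ^{(k−1)×k} and F̃ ∈ ℝ^{(k−1)×k} consist of the first k−1 rows of R and F, respectively. Then R̃ (Fᵀ)⁻¹ S 𝟙_k = F̃ S q, where 𝟙_k = (1,…,1)ᵀ ∈ ℝ^k. (Identity (A.3) in the proof of Theorem 3.2) -/
/-!
Write `n = k - 1` and `θ_m = m π / n`. The extremal nodes are the `cos θ_m`, and `T_n` takes the
values `(-1)^m` there, so the coefficient vector of `T_n` is `(Fᵀ)⁻¹ S 𝟙`. Row `l` of the left-hand
side is therefore `½ ∫ t ^ l T_n(t) v(t) dt`.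

Row `l` of the right-hand side is a combination of the moments `∫ T_j v`, `j < 2n`, whose
coefficients are trapezoidal sums over the angles `θ_m`. It suffices that, as polynomials, the same
combination of the `T_j` gives `n t ^ l T_n(t)` when `l < n` (`kernel_identity`). With `T_a` in place
of `t ^ l`, `|a| < n`, this is `2 T_n T_a = T_{n+a} + T_{n-a}` together with the discrete
orthogonality of cosines (`trapSum_cos`, `trapSum_triple`); no aliasing occurs because `n + a` and
`n - a` both lie in `[1, 2n - 1]`. Powers of `t` are introduced one at a time through
`2 t T_a = T_{a+1} + T_{a-1}`.
-/

set_option autoImplicit false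

open Set Real Polynomial MeasureTheory Matrix

/-! ### The trapezoidal rule on cosines -/

/-- The trapezoidal sum `g 0 / 2 + g 1 + ⋯ + g (n - 1) + g n / 2`. -/
noncomputable def trapSum (n : ℕ) (g : ℕ → ℝ) : ℝ :=
  ∑ m ∈ Finset.range n, (g m + g (m + 1)) / 2

lemma trapSum_add (n : ℕ) (f g : ℕ → ℝ) :
    trapSum n (fun m => f m + g m) = trapSum n f + trapSum n g := by
  unfold trapSum
  rw [← Finset.sum_add_distrib]
  exact Finset.sum_congr rfl fun m _ => by ring

lemma trapSum_mul_left (n : ℕ) (c : ℝ) (g : ℕ → ℝ) :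
    trapSum n (fun m => c * g m) = c * trapSum n g := by
  unfold trapSum
  rw [Finset.mul_sum]
  exact Finset.sum_congr rfl fun m _ => by ring

/-- The weights `ν` of the statement, with the nodes listed in reverse order, are those of the
trapezoidal rule. -/
lemma weighted_sum_eq_trapSum (n : ℕ) (hn : 1 ≤ n) (g : ℕ → ℝ) :
    ∑ i : Fin (n + 1), (if (i : ℕ) = 0 ∨ (i : ℕ) = n then (1 / 2 : ℝ) else 1) * g (n - i)
      = trapSum n g := by
  rw [Fin.sum_univ_eq_sum_range
    (fun i : ℕ => (if i = 0 ∨ i = n then (1 / 2 : ℝ) else 1) * g (n - i))]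
  rw [← Finset.sum_range_reflect]
  have h : ∀ m ∈ Finset.range (n + 1),
      (if n + 1 - 1 - m = 0 ∨ n + 1 - 1 - m = n then (1 / 2 : ℝ) else 1)
        * g (n - (n + 1 - 1 - m)) = (if m = 0 ∨ m = n then (1 / 2 : ℝ) else 1) * g m := by
    intro m hm
    have hm' : m ≤ n := by simpa [Nat.lt_succ_iff] using hm
    rw [show n - (n + 1 - 1 - m) = m by omega]
    congr 1
    exact if_congr (by omega) rfl rfl
  rw [Finset.sum_congr rfl h]
  obtain ⟨p, rfl⟩ : ∃ p, n = p + 1 := ⟨n - 1, by omega⟩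
  unfold trapSum
  rw [Finset.sum_range_succ, Finset.sum_range_succ', ← Finset.sum_div, Finset.sum_add_distrib,
    Finset.sum_range_succ' (fun m => g m), Finset.sum_range_succ (fun m => g (m + 1))]
  have h2 : ∀ m ∈ Finset.range p,
      (if m + 1 = 0 ∨ m + 1 = p + 1 then (1 / 2 : ℝ) else 1) * g (m + 1) = g (m + 1) := by
    intro m hm
    have := Finset.mem_range.1 hm
    rw [if_neg (by omega), one_mul]
  rw [Finset.sum_congr rfl h2]
  simp
  ring

/-- Discrete orthogonality: the trapezoidal rule sees `cos (b ·)` only when it aliases to the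
constant `1` on the grid `m π / n`, `0 ≤ m ≤ n`. -/
lemma trapSum_cos (n : ℕ) (hn : 1 ≤ n) (b : ℤ) :
    trapSum n (fun m => Real.cos (b * (m * π / n))) = if (2 * n : ℤ) ∣ b then (n : ℝ) else 0 := by
  have hn0 : (n : ℝ) ≠ 0 := by positivity
  split_ifs with h
  · obtain ⟨c, rfl⟩ := h
    have : ∀ m : ℕ, Real.cos (((2 * n * c : ℤ) : ℝ) * (m * π / n)) = 1 := by
      intro m
      rw [Real.cos_eq_one_iff]
      exact ⟨c * m, by push_cast; field_simp⟩
    simp only [this]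
    simp [trapSum]
  · set φ : ℝ := b * (π / n) with hφ
    have hs : Real.sin (φ / 2) ≠ 0 := by
      intro h0
      obtain ⟨c, hc⟩ := Real.sin_eq_zero_iff.1 h0
      apply h
      refine ⟨c, ?_⟩
      rw [hφ] at hc
      field_simp at hc
      have : (b : ℝ) = ((2 * n * c : ℤ) : ℝ) := by push_cast; linarith
      exact_mod_cast this
    -- Multiplying by `2 sin (φ / 2)` makes the sum telescope.
    have tel : ∀ m : ℕ, (Real.cos (b * (m * π / n)) + Real.cos (b * ((m + 1 : ℕ) * π / n))) / 2
          * (2 * Real.sin (φ / 2))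
        = Real.cos (φ / 2) * (Real.sin ((m + 1 : ℕ) * φ) - Real.sin (m * φ)) := by
      intro m
      rw [show b * (m * π / n) = m * φ by rw [hφ]; ring,
        show b * ((m + 1 : ℕ) * π / n) = (m + 1 : ℕ) * φ by rw [hφ]; ring,
        Real.cos_add_cos, Real.sin_sub_sin]
      rw [show ((m : ℝ) * φ - (m + 1 : ℕ) * φ) / 2 = -(φ / 2) by push_cast; ring,
        show (((m + 1 : ℕ) : ℝ) * φ - m * φ) / 2 = φ / 2 by push_cast; ring,
        add_comm ((m : ℝ) * φ), Real.cos_neg]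
      ring
    have key : trapSum n (fun m => Real.cos (b * (m * π / n))) * (2 * Real.sin (φ / 2)) = 0 := by
      unfold trapSum
      rw [Finset.sum_mul, Finset.sum_congr rfl (fun m _ => tel m), ← Finset.mul_sum,
        Finset.sum_range_sub (fun m : ℕ => Real.sin (m * φ))]
      have : (n : ℝ) * φ = b * π := by rw [hφ]; field_simp
      rw [this, Real.sin_int_mul_pi]
      simp
    exact (mul_eq_zero.1 key).resolve_right (by positivity)

/-- With `θ_m = m π / n`, one has `(-1)^m = cos (n θ_m)`, so by product-to-sum formulas the sum reduces to
four instances of `trapSum_cos`. -/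
lemma trapSum_triple (n : ℕ) (hn : 1 ≤ n) (a j : ℤ) (ha : |a| < n) (hj0 : 0 ≤ j)
    (hj : j < 2 * n) :
    trapSum n (fun m => (-1) ^ m * Real.cos (a * (m * π / n)) * Real.cos (j * (m * π / n)))
      = (if j = n + a then (n : ℝ) / 2 else 0) + (if j = n - a then (n : ℝ) / 2 else 0) := by
  have hn0 : (n : ℝ) ≠ 0 := by positivity
  have hsplit : ∀ m : ℕ,
      (-1) ^ m * Real.cos (a * (m * π / n)) * Real.cos (j * (m * π / n))
      = 1 / 4 * ((Real.cos ((n + a + j : ℤ) * (m * π / n))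
          + Real.cos ((n + a - j : ℤ) * (m * π / n)))
        + (Real.cos ((n - a + j : ℤ) * (m * π / n))
          + Real.cos ((n - a - j : ℤ) * (m * π / n)))) := by
    intro m
    have h1 : ((-1 : ℝ)) ^ m = Real.cos (n * (m * π / n)) := by
      rw [← Real.cos_nat_mul_pi]; congr 1; field_simp
    have h2 : Real.sin (n * (m * π / n)) = 0 := by
      rw [← Real.sin_nat_mul_pi m]; congr 1; field_simp
    rw [h1]
    push_cast
    simp only [add_mul, sub_mul, Real.cos_add, Real.cos_sub, Real.sin_add, Real.sin_sub, h2]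
    ring
  simp only [hsplit]
  rw [trapSum_mul_left, trapSum_add, trapSum_add, trapSum_add]
  simp only [trapSum_cos n hn]
  obtain ⟨ha1, ha2⟩ := abs_lt.1 ha
  have dvd_iff : ∀ b : ℤ, -(2 * n) < b → b < 4 * n → ((2 * n : ℤ) ∣ b ↔ b = 0 ∨ b = 2 * n) := by
    intro b h1 h2
    constructor
    · rintro ⟨c, rfl⟩
      have hc1 : -1 < c := by
        by_contra! hc
        nlinarith
      have hc2 : c < 2 := by
        by_contra! hc
        nlinarith
      obtain rfl | rfl : c = 0 ∨ c = 1 := by omega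
      · left; ring
      · right; ring
    · rintro (rfl | rfl) <;> simp
  have e1 : (2 * n : ℤ) ∣ n + a + j ↔ j = n - a := by
    rw [dvd_iff _ (by omega) (by omega)]; omega
  have e2 : (2 * n : ℤ) ∣ n + a - j ↔ j = n + a := by
    rw [dvd_iff _ (by omega) (by omega)]; omega
  have e3 : (2 * n : ℤ) ∣ n - a + j ↔ j = n + a := by
    rw [dvd_iff _ (by omega) (by omega)]; omega
  have e4 : (2 * n : ℤ) ∣ n - a - j ↔ j = n - a := by
    rw [dvd_iff _ (by omega) (by omega)]; omega
  simp only [e1, e2, e3, e4]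
  split_ifs <;> ring

/-! ### Expansion in Chebyshev polynomials -/

/-- The expansion of `n * X ^ l * T_a * T_n` in Chebyshev polynomials, with coefficients read off at
the extremal nodes. The factor `T_a` makes the induction on `l` go through, as
`2 X T_a = T_{a+1} + T_{a-1}`. -/
lemma kernel_identity (n : ℕ) (hn : 1 ≤ n) (t : ℝ) (l : ℕ) : ∀ a : ℤ, l + |a| < n →
    ∑ j ∈ Finset.range (2 * n),
        trapSum n (fun m => (-1) ^ m * (Real.cos (m * π / n) ^ l * Real.cos (a * (m * π / n)))
          * Real.cos (j * (m * π / n))) * (Chebyshev.T ℝ (j : ℤ)).eval t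
      = n * (t ^ l * (Chebyshev.T ℝ a).eval t * (Chebyshev.T ℝ n).eval t) := by
  induction l with
  | zero =>
    intro a ha
    have ha' : |a| < n := by simpa using ha
    obtain ⟨ha1, ha2⟩ := abs_lt.1 ha'
    have h : ∀ j ∈ Finset.range (2 * n),
        trapSum n (fun m => (-1) ^ m * (Real.cos (m * π / n) ^ 0 * Real.cos (a * (m * π / n)))
          * Real.cos (j * (m * π / n))) * (Chebyshev.T ℝ (j : ℤ)).eval t
        = (if j = (n + a).toNat then (n : ℝ) / 2 * (Chebyshev.T ℝ (n + a)).eval t else 0)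
          + (if j = (n - a).toNat then (n : ℝ) / 2 * (Chebyshev.T ℝ (n - a)).eval t else 0) := by
      intro j hj
      have hj' := Finset.mem_range.1 hj
      have := trapSum_triple n hn a j ha' (by omega) (by omega)
      simp only [Int.cast_natCast] at this
      simp only [pow_zero, one_mul, this]
      have c1 : (j : ℤ) = n + a ↔ j = (n + a).toNat := by omega
      have c2 : (j : ℤ) = n - a ↔ j = (n - a).toNat := by omega
      rw [add_mul, ite_mul, ite_mul, zero_mul]
      congr 1
      · rw [← if_congr c1 rfl rfl]
        split_ifs with h
        · rw [h]
        · rfl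
      · rw [← if_congr c2 rfl rfl]
        split_ifs with h
        · rw [h]
        · rfl
    rw [Finset.sum_congr rfl h, Finset.sum_add_distrib, Finset.sum_ite_eq', Finset.sum_ite_eq',
      if_pos (Finset.mem_range.2 (by omega)), if_pos (Finset.mem_range.2 (by omega))]
    have := congrArg (Polynomial.eval t) (Chebyshev.T_mul_T ℝ (n : ℤ) a)
    simp only [eval_mul, eval_add, eval_ofNat] at this
    rw [pow_zero]
    linear_combination (-(n : ℝ) / 2) * this
  | succ l ih =>
    intro a ha
    have h1 := ih (a + 1) (by have := abs_add_le a 1; push_cast at ha; simp at this; omega)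
    have h2 := ih (a - 1) (by have := abs_sub a 1; push_cast at ha; simp at this; omega)
    have hcos : ∀ j m : ℕ,
        (-1) ^ m * (Real.cos (m * π / n) ^ (l + 1) * Real.cos (a * (m * π / n)))
          * Real.cos (j * (m * π / n))
        = 1 / 2 * ((-1) ^ m * (Real.cos (m * π / n) ^ l * Real.cos ((a + 1 : ℤ) * (m * π / n)))
            * Real.cos (j * (m * π / n))
          + (-1) ^ m * (Real.cos (m * π / n) ^ l * Real.cos ((a - 1 : ℤ) * (m * π / n)))
            * Real.cos (j * (m * π / n))) := by
      intro j m
      push_cast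
      simp only [add_mul, sub_mul, one_mul, Real.cos_add, Real.cos_sub]
      ring
    -- Both sides of the recurrence `2 X T_a = T_{a+1} + T_{a-1}`: `hcos` at the nodes, `hT` at `t`.
    simp only [hcos, trapSum_mul_left, trapSum_add]
    have hT := congrArg (Polynomial.eval t) (Chebyshev.T_add_one ℝ a)
    simp only [eval_mul, eval_sub, eval_ofNat, eval_X] at hT
    simp only [mul_assoc, add_mul, mul_add, Finset.sum_add_distrib, ← Finset.mul_sum] at h1 h2 ⊢
    rw [h1, h2, hT]
    ring

/-- `kernel_identity` at `a = 0`, integrated against `v`. -/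
lemma identity_aux (n : ℕ) (hn : 1 ≤ n) (v : ℝ → ℝ)
    (hv : IntegrableOn v (Icc (-1 : ℝ) 1)) (l : ℕ) (hl : l < n) :
    ∑ j ∈ Finset.range (2 * n),
        trapSum n (fun m => (-1) ^ m * Real.cos (m * π / n) ^ l * Real.cos (j * (m * π / n)))
          * ∫ t in (-1 : ℝ)..1, (Chebyshev.T ℝ (j : ℤ)).eval t * v t
      = n * ∫ t in (-1 : ℝ)..1, t ^ l * (Chebyshev.T ℝ n).eval t * v t := by
  have hvi : IntervalIntegrable v volume (-1) 1 :=
    (intervalIntegrable_iff_integrableOn_Icc_of_le (by norm_num)).2 hv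
  simp only [← intervalIntegral.integral_const_mul]
  rw [← intervalIntegral.integral_finsetSum]
  · refine intervalIntegral.integral_congr fun t _ => ?_
    have := kernel_identity n hn t l 0 (by simpa using hl)
    simp only [Int.cast_zero, zero_mul, Real.cos_zero, mul_one, Chebyshev.T_zero, eval_one] at this
    simp only [← mul_assoc] at this ⊢
    rw [← this, Finset.sum_mul]
  · intro j _
    exact (hvi.continuousOn_mul (Polynomial.continuous _).continuousOn).const_mul _

/-! ### The matrix identity -/

theorem identity_A3 (k : ℕ) (hk : 2 ≤ k)
    (v : ℝ → ℝ) (hv0 : ∀ x, 0 ≤ v x) (hv : IntegrableOn v (Icc (-1 : ℝ) 1))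
    (x : Fin k → ℝ)
    (hx : ∀ i, x i = Real.cos (((k - 1 - (i : ℕ) : ℕ) : ℝ) * π / (k - 1)))
    (F : Matrix (Fin k) (Fin k) ℝ) (hF : ∀ l i, F l i = x i ^ (l : ℕ))
    (S : Matrix (Fin k) (Fin k) ℝ)
    (hS : S = Matrix.diagonal fun i : Fin k => (-1 : ℝ) ^ (k - 1 - (i : ℕ)))
    (R : Matrix (Fin k) (Fin k) ℝ)
    (hR : ∀ i j : Fin k,
      R i j = (1 / 2) * ∫ t in (-1 : ℝ)..1, t ^ ((i : ℕ) + (j : ℕ)) * v t)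
    (ν : Fin k → ℝ)
    (hν : ∀ i, ν i = if (i : ℕ) = 0 ∨ (i : ℕ) = k - 1 then 1 / 2 else 1)
    (q : Fin k → ℝ)
    (hq : ∀ i, q i = ν i / (2 * (k - 1)) *
      ∑ j ∈ Finset.range (2 * k - 2),
        Real.cos (j * ((k - 1 - (i : ℕ) : ℕ) : ℝ) * π / (k - 1)) *
          ∫ t in (-1 : ℝ)..1, Polynomial.eval t (Polynomial.Chebyshev.T ℝ (j : ℤ)) * v t) :
    ∀ l : Fin k, (l : ℕ) < k - 1 →
      ((R * (Fᵀ)⁻¹ * S).mulVec fun _ : Fin k => (1 : ℝ)) l = ((F * S).mulVec q) l := by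
  intro l hl
  obtain ⟨n, rfl⟩ : ∃ n, k = n + 1 := ⟨k - 1, by omega⟩
  have hn : 1 ≤ n := by omega
  have hn0 : (n : ℝ) ≠ 0 := by positivity
  have hcast : ((n + 1 : ℕ) : ℝ) - 1 = n := by push_cast; ring
  have hrange : 2 * (n + 1) - 2 = 2 * n := by omega
  simp only [hcast, hrange, Nat.add_sub_cancel] at hx hS hν hq hl
  have hvi : IntervalIntegrable v volume (-1) 1 :=
    (intervalIntegrable_iff_integrableOn_Icc_of_le (by norm_num)).2 hv
  have hinj : Function.Injective x := by
    intro i j hij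
    rw [hx, hx] at hij
    have hmem : ∀ i : Fin (n + 1), ((n - (i : ℕ) : ℕ) : ℝ) * π / n ∈ Icc 0 π := by
      intro i
      refine ⟨by positivity, ?_⟩
      rw [div_le_iff₀ (by positivity), mul_comm]
      gcongr
      exact_mod_cast Nat.sub_le _ _
    have := Real.injOn_cos (hmem i) (hmem j) hij
    field_simp at this
    have h : n - (i : ℕ) = n - (j : ℕ) := by exact_mod_cast this
    ext
    omega
  have hFV : Fᵀ = Matrix.vandermonde x := by
    ext i j
    simp [hF, Matrix.vandermonde_apply]
  have hdet : IsUnit (Fᵀ).det := by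
    rw [hFV, isUnit_iff_ne_zero]
    exact Matrix.det_vandermonde_ne_zero_iff.2 hinj
  have hTdeg : (Chebyshev.T ℝ (n : ℤ)).natDegree < n + 1 := by
    rw [Chebyshev.natDegree_T]; simp
  have heval : ∀ t : ℝ, (Chebyshev.T ℝ (n : ℤ)).eval t
      = ∑ j : Fin (n + 1), (Chebyshev.T ℝ (n : ℤ)).coeff j * t ^ (j : ℕ) := by
    intro t
    rw [Polynomial.eval_eq_sum_range' hTdeg, Finset.sum_range]
  -- The coefficient vector of `T_n` solves `Fᵀ c = S 𝟙`, as `T_n` alternates at the nodes.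
  have hc : (Fᵀ) *ᵥ (fun j : Fin (n + 1) => (Chebyshev.T ℝ (n : ℤ)).coeff j)
      = S *ᵥ fun _ => (1 : ℝ) := by
    ext i
    rw [hS, Matrix.mulVec_diagonal, mul_one]
    have h := heval (x i)
    rw [hx i, Chebyshev.T_real_cos] at h
    rw [show ((n : ℤ) : ℝ) * (((n - (i : ℕ) : ℕ) : ℝ) * π / n) = ((n - (i : ℕ) : ℕ) : ℝ) * π by
      push_cast; field_simp, Real.cos_nat_mul_pi] at h
    rw [h, ← hx i]
    simp only [Matrix.mulVec, dotProduct, Matrix.transpose_apply, hF]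
    exact Finset.sum_congr rfl fun j _ => mul_comm _ _
  have hL : ((R * (Fᵀ)⁻¹ * S).mulVec fun _ => (1 : ℝ)) l
      = 1 / 2 * ∫ t in (-1 : ℝ)..1, t ^ (l : ℕ) * (Chebyshev.T ℝ n).eval t * v t := by
    rw [← Matrix.mulVec_mulVec, ← hc, Matrix.mulVec_mulVec,
      Matrix.mul_assoc, Matrix.nonsing_inv_mul _ hdet, Matrix.mul_one]
    simp only [Matrix.mulVec, dotProduct, hR]
    simp only [mul_assoc, ← Finset.mul_sum, ← intervalIntegral.integral_mul_const]
    rw [← intervalIntegral.integral_finsetSum]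
    · congr 1
      refine intervalIntegral.integral_congr fun t _ => ?_
      simp only [heval, Finset.sum_mul, Finset.mul_sum]
      exact Finset.sum_congr rfl fun j _ => by ring
    · intro j _
      have := (hvi.continuousOn_mul (g := fun t : ℝ => t ^ ((l : ℕ) + (j : ℕ)))
        (by fun_prop)).mul_const ((Chebyshev.T ℝ (n : ℤ)).coeff j)
      simpa only [mul_assoc] using this
  rw [hL]
  have hA := identity_aux n hn v hv l hl
  have hRhs : ((F * S).mulVec q) l = 1 / (2 * n) * ∑ j ∈ Finset.range (2 * n),
        trapSum n (fun m => (-1) ^ m * Real.cos (m * π / n) ^ (l : ℕ)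
          * Real.cos (j * (m * π / n)))
          * ∫ t in (-1 : ℝ)..1, (Chebyshev.T ℝ (j : ℤ)).eval t * v t := by
    simp only [← weighted_sum_eq_trapSum n hn]
    rw [hS]
    simp only [Matrix.mulVec, dotProduct, Matrix.mul_diagonal, hq, hF, hx, hν]
    simp only [Finset.sum_mul, Finset.mul_sum]
    rw [Finset.sum_comm]
    refine Finset.sum_congr rfl fun j _ => Finset.sum_congr rfl fun i _ => ?_
    rw [show (j : ℝ) * ((n - (i : ℕ) : ℕ) : ℝ) * π / n = j * (((n - (i : ℕ) : ℕ) : ℝ) * π / n) by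
      ring]
    ring
  rw [hRhs, hA]
  field_simp
end
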